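/- Let Γ be a regular nicely distance-balanced graph with valency k = 4, diameter d = 3 and γ(Γ) = 4. Then for every edge x_0 x_1 of Γ we have |D^1_2(x_1,x_0)| = |D^2_1(x_1,x_0)| = 2. -/

import Mathlib

open SimpleGraph Finset

/-- `W_{u,v}`: the set of vertices strictly closer to `u` than to `v`. -/
noncomputable def ndbW {V : Type*} [Fintype V] (G : SimpleGraph V) (u v : V) : Finset V :=
  Finset.univ.filter fun x => G.dist x u < G.dist x v

/-- `D^i_j(u,v)`: the set of vertices at distance `i` from `u` and `j` from `v`. -/
noncomputable def ndbD {V : Type*} [Fintype V] (G : SimpleGraph V) (u v : V) (i j : ℕ) : Finset V :=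
  Finset.univ.filter fun x => G.dist x u = i ∧ G.dist x v = j

/-- `G` is nicely distance-balanced with constant `γ`. -/
def IsNDB {V : Type*} [Fintype V] (G : SimpleGraph V) (γ : ℕ) : Prop :=
  ∀ u v : V, G.Adj u v → (ndbW G u v).card = γ ∧ (ndbW G v u).card = γ

/-- `G` has diameter `d`. -/
def HasDiam {V : Type*} [Fintype V] (G : SimpleGraph V) (d : ℕ) : Prop :=
  (∀ u v : V, G.dist u v ≤ d) ∧ ∃ u v : V, G.dist u v = d

/-!
Since `k = γ` and the diameter is `3`, comparing the neighborhood of `u` with `W_{u,v}` gives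
`|D^2_3(u,v)| = |D^1_1(u,v)|` for every edge `uv`, and the claim says that every edge lies in
exactly one triangle. An edge `uv` in a triangle has `D^2_3(u,v)` nonempty, hence `D^1_2(u,v)`
nonempty, so it lies in at most two triangles.

Suppose that `uv` lies in two triangles and let `p`, `q` be the fourth neighbors of `u`, `v`. Once
`K₄` and induced paths on four vertices in the local graphs are excluded, `vq` lies in no triangle.
The two ends of a triangle-free edge have the same vertices at distance `3`, so `v` and `q` both lie
in `D^2_3(p,t)` for every `t` in `D^2_3(u,v)`, and this produces a `K₄` through `p`.

If some edge lies in no triangle, then its ends have no vertex at distance `3`; every edge at such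
an end is again in no triangle, so this spreads over the whole graph and contradicts the diameter.
-/

section Distance

variable {V : Type*} {G : SimpleGraph V} {u v x : V}

lemma exists_adj_dist_eq_of_dist_eq_succ {n : ℕ} (h : G.dist u v = n + 1) :
    ∃ w, G.Adj u w ∧ G.dist w v = n := by
  obtain ⟨p, hp⟩ := exists_walk_of_dist_ne_zero (G := G) (u := u) (v := v) (by lia)
  cases p with
  | nil => simp at h
  | @cons _ w _ huw p =>
    rw [Walk.length_cons] at hp
    have hwv : G.dist w v ≤ p.length := dist_le p
    have huv : G.dist u v ≤ G.dist u w + G.dist w v := huw.reachable.dist_triangle_left v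
    rw [dist_eq_one_iff_adj.mpr huw] at huv
    exact ⟨w, huw, by lia⟩

lemma dist_le_dist_add_one_of_adj (x : V) (huv : G.Adj u v) : G.dist x u ≤ G.dist x v + 1 := by
  have := huv.symm.diff_dist_adj (u := x)
  lia

end Distance

section Counting

variable {V : Type*} [Fintype V] {G : SimpleGraph V} {u v x : V} {i j : ℕ}

@[simp]
lemma mem_ndbD : x ∈ ndbD G u v i j ↔ G.dist x u = i ∧ G.dist x v = j := by
  simp [ndbD]

@[simp]
lemma mem_ndbW : x ∈ ndbW G u v ↔ G.dist x u < G.dist x v := by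
  simp [ndbW]

lemma ndbD_swap (u v : V) (i j : ℕ) : ndbD G u v i j = ndbD G v u j i := by
  ext x
  simp [and_comm]

lemma disjoint_ndbD {i' j' : ℕ} (h : i ≠ i' ∨ j ≠ j') :
    Disjoint (ndbD G u v i j) (ndbD G u v i' j') := by
  rw [Finset.disjoint_left]
  grind [mem_ndbD]

lemma adj_iff_eq_or_mem_ndbD (huv : G.Adj u v) :
    G.Adj x u ↔ x = v ∨ x ∈ ndbD G u v 1 1 ∨ x ∈ ndbD G u v 1 2 := by
  simp only [mem_ndbD, dist_eq_one_iff_adj]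
  constructor
  · intro hxu
    have hle : G.dist x v ≤ G.dist x u + 1 := dist_le_dist_add_one_of_adj x huv.symm
    rw [dist_eq_one_iff_adj.mpr hxu] at hle
    have hzero : G.dist x v = 0 ↔ x = v := (hxu.reachable.trans huv.reachable).dist_eq_zero_iff
    have hone : G.dist x v = 1 ↔ G.Adj x v := dist_eq_one_iff_adj
    grind
  · rintro (rfl | h | h)
    exacts [huv.symm, h.1, h.1]

lemma degree_eq_card_ndbD_add [DecidableRel G.Adj] (huv : G.Adj u v) :
    G.degree u = #(ndbD G u v 1 1) + #(ndbD G u v 1 2) + 1 := by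
  classical
  have hN : G.neighborFinset u = insert v (ndbD G u v 1 1 ∪ ndbD G u v 1 2) := by
    ext x
    simp only [mem_neighborFinset, G.adj_comm u x, adj_iff_eq_or_mem_ndbD huv, mem_insert,
      mem_union]
  rw [← card_neighborFinset_eq_degree, hN, card_insert_of_notMem (by simp),
    card_union_of_disjoint (disjoint_ndbD (by simp))]

lemma card_ndbW_eq_card_ndbD_add (hconn : G.Connected) (hdist : ∀ x y, G.dist x y ≤ 3)
    (huv : G.Adj u v) : #(ndbW G u v) = #(ndbD G u v 1 2) + #(ndbD G u v 2 3) + 1 := by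
  classical
  have huv1 : G.dist u v = 1 := dist_eq_one_iff_adj.mpr huv
  have hW : ndbW G u v = insert u (ndbD G u v 1 2 ∪ ndbD G u v 2 3) := by
    ext x
    have hle : G.dist x v ≤ G.dist x u + 1 := dist_le_dist_add_one_of_adj x huv.symm
    have hzero : G.dist x u = 0 ↔ x = u := hconn.dist_eq_zero_iff
    have := hdist x v
    simp only [mem_ndbW, mem_insert, mem_union, mem_ndbD]
    grind
  rw [hW, card_insert_of_notMem (by simp), card_union_of_disjoint (disjoint_ndbD (by simp))]

lemma exists_adj_mem_ndbD_one_two (huv : G.Adj u v) (hx : x ∈ ndbD G u v 2 3) :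
    ∃ p ∈ ndbD G u v 1 2, G.Adj x p := by
  obtain ⟨hxu, hxv⟩ := mem_ndbD.mp hx
  obtain ⟨p, hxp, hpu⟩ := exists_adj_dist_eq_of_dist_eq_succ hxu
  refine ⟨p, mem_ndbD.mpr ⟨hpu, ?_⟩, hxp⟩
  have hpv : G.dist p v ≤ G.dist p u + 1 := dist_le_dist_add_one_of_adj p huv.symm
  have hvp := dist_le_dist_add_one_of_adj v hxp
  rw [G.dist_comm, G.dist_comm (u := v)] at hvp
  lia

end Counting

/-- A connected graph of diameter at most `3` is *triangle-balanced* if every edge `uv` lies in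
exactly `|D^2_3(u,v)|` triangles. A nicely distance-balanced `k`-regular graph of diameter at most
`3` with `γ = k` is of this kind, and this is the only use made of the distance-balance. -/
structure IsTriangleBalanced {V : Type*} [Fintype V] (G : SimpleGraph V) : Prop where
  connected : G.Connected
  dist_le_three (x y : V) : G.dist x y ≤ 3
  card_two_three ⦃u v : V⦄ : G.Adj u v → #(ndbD G u v 2 3) = #(ndbD G u v 1 1)

lemma IsNDB.isTriangleBalanced {V : Type*} [Fintype V] {G : SimpleGraph V} [DecidableRel G.Adj]
    {k : ℕ} (hndb : IsNDB G k) (hconn : G.Connected) (hreg : G.IsRegularOfDegree k)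
    (hdist : ∀ x y, G.dist x y ≤ 3) : IsTriangleBalanced G where
  connected := hconn
  dist_le_three := hdist
  card_two_three u v huv := by
    have hdeg := degree_eq_card_ndbD_add huv
    have hW := card_ndbW_eq_card_ndbD_add hconn hdist huv
    rw [hreg u] at hdeg
    rw [(hndb u v huv).1] at hW
    lia

namespace IsTriangleBalanced

variable {V : Type*} [Fintype V] {G : SimpleGraph V} {u v x y f g : V}

lemma dist_eq_three_of_ndbD_one_one_eq_empty (hG : IsTriangleBalanced G) (hxy : G.Adj x y)
    (h0 : ndbD G x y 1 1 = ∅) (hf : G.dist f x = 3) : G.dist f y = 3 := by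
  have hD : ndbD G y x 2 3 = ∅ := by
    rw [← card_eq_zero, hG.card_two_three hxy.symm, ndbD_swap, h0, card_empty]
  have hne : G.dist f y ≠ 2 := fun hfy => by
    simpa [hD] using (mem_ndbD.mpr ⟨hfy, hf⟩ : f ∈ ndbD G y x 2 3)
  have hle : G.dist f x ≤ G.dist f y + 1 := dist_le_dist_add_one_of_adj f hxy
  have := hG.dist_le_three f y
  lia

-- Distance `3` from `x` and distance `3` from `y` are equivalent, so `x` and `y` both move from
-- distance `2` to distance `3` along the edge `gf`.
lemma mem_ndbD_two_three_of_ndbD_one_one_eq_empty (hG : IsTriangleBalanced G) (hxy : G.Adj x y)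
    (h0 : ndbD G x y 1 1 = ∅) (hgf : G.Adj g f) (hg : G.dist g x = 2) (hf : G.dist f x = 3) :
    x ∈ ndbD G g f 2 3 ∧ y ∈ ndbD G g f 2 3 := by
  have hfy : G.dist f y = 3 := hG.dist_eq_three_of_ndbD_one_one_eq_empty hxy h0 hf
  have hgy : G.dist g y ≠ 3 := fun hgy => by
    have := hG.dist_eq_three_of_ndbD_one_one_eq_empty hxy.symm (ndbD_swap x y 1 1 ▸ h0) hgy
    lia
  have hle : G.dist y f ≤ G.dist y g + 1 := dist_le_dist_add_one_of_adj y hgf.symm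
  have := hG.dist_le_three g y
  simp only [mem_ndbD, G.dist_comm (u := x), G.dist_comm (u := y)] at hle ⊢
  lia

lemma card_ndbD_one_one_le [DecidableRel G.Adj] {k : ℕ} (hG : IsTriangleBalanced G)
    (hreg : G.IsRegularOfDegree (k + 2)) (huv : G.Adj u v) : #(ndbD G u v 1 1) ≤ k := by
  have hdeg := degree_eq_card_ndbD_add huv
  rw [hreg u] at hdeg
  by_contra! hk
  have h23 : 0 < #(ndbD G u v 2 3) := by
    rw [hG.card_two_three huv]
    lia
  obtain ⟨x, hx⟩ := card_pos.mp h23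
  obtain ⟨p, hp, -⟩ := exists_adj_mem_ndbD_one_two huv hx
  have := card_pos.mpr ⟨p, hp⟩
  lia

end IsTriangleBalanced

section UniqueOuterNeighbor

variable {V : Type*} [Fintype V] {G : SimpleGraph V} {u v x p q : V}

lemma exists_ndbD_one_two_eq_singleton [DecidableRel G.Adj] {k : ℕ}
    (hreg : G.IsRegularOfDegree (k + 2)) (huv : G.Adj u v) (h : #(ndbD G u v 1 1) = k) :
    ∃ p, ndbD G u v 1 2 = {p} := by
  have hdeg := degree_eq_card_ndbD_add huv
  rw [hreg u] at hdeg
  exact card_eq_one.mp (by lia)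

lemma mem_ndbD_one_one_of_adj (huv : G.Adj u v) (hp : ndbD G u v 1 2 = {p}) (hxu : G.Adj x u)
    (hxv : x ≠ v) (hxp : x ≠ p) : x ∈ ndbD G u v 1 1 := by
  have := (adj_iff_eq_or_mem_ndbD huv).mp hxu
  rw [hp, mem_singleton] at this
  tauto

lemma adj_of_mem_ndbD_two_three (huv : G.Adj u v) (hp : ndbD G u v 1 2 = {p})
    (hx : x ∈ ndbD G u v 2 3) : G.Adj x p := by
  obtain ⟨p', hp', hxp'⟩ := exists_adj_mem_ndbD_one_two huv hx
  rw [hp, mem_singleton] at hp'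
  exact hp' ▸ hxp'

lemma ndbD_two_three_subset_erase_neighborFinset [DecidableEq V] [DecidableRel G.Adj]
    (huv : G.Adj u v) (hp : ndbD G u v 1 2 = {p}) :
    ndbD G u v 2 3 ⊆ (G.neighborFinset p).erase u := by
  intro x hx
  have hxu : x ≠ u := by
    rintro rfl
    simp at hx
  exact mem_erase.mpr
    ⟨hxu, (G.mem_neighborFinset p x).mpr (adj_of_mem_ndbD_two_three huv hp hx).symm⟩

lemma ndbD_one_one_eq_empty_of_forall_not_adj (huv : G.Adj u v) (hp : ndbD G u v 1 2 = {p})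
    (h : ∀ x ∈ ndbD G u v 1 1, ¬ G.Adj p x) : ndbD G u p 1 1 = ∅ := by
  have hpv : G.dist p v = 2 := (mem_ndbD.mp (hp ▸ mem_singleton_self p)).2
  refine eq_empty_of_forall_notMem fun x hx => ?_
  simp only [mem_ndbD, dist_eq_one_iff_adj] at hx
  have hxv : x ≠ v := by
    rintro rfl
    simp [dist_eq_one_iff_adj.mpr hx.2.symm] at hpv
  exact h x (mem_ndbD_one_one_of_adj huv hp hx.1 hxv hx.2.ne) hx.2.symm

lemma IsTriangleBalanced.mem_ndbD_two_three_of_forall_not_adj (hG : IsTriangleBalanced G)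
    (huv : G.Adj u v) (hp : ndbD G u v 1 2 = {p}) (hq : ndbD G v u 1 2 = {q})
    (h : ∀ y ∈ ndbD G v u 1 1, ¬ G.Adj q y) (hx : x ∈ ndbD G u v 2 3) :
    v ∈ ndbD G p x 2 3 ∧ q ∈ ndbD G p x 2 3 := by
  have hpD : p ∈ ndbD G u v 1 2 := hp ▸ mem_singleton_self p
  have hqD : q ∈ ndbD G v u 1 2 := hq ▸ mem_singleton_self q
  have hvq : G.Adj v q := (dist_eq_one_iff_adj.mp (mem_ndbD.mp hqD).1).symm
  exact hG.mem_ndbD_two_three_of_ndbD_one_one_eq_empty hvq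
    (ndbD_one_one_eq_empty_of_forall_not_adj huv.symm hq h)
    (adj_of_mem_ndbD_two_three huv hp hx).symm (mem_ndbD.mp hpD).2 (mem_ndbD.mp hx).2

end UniqueOuterNeighbor

namespace IsTriangleBalanced

variable {V : Type*} [Fintype V] {G : SimpleGraph V} [DecidableRel G.Adj] {u v x y z p : V}

lemma card_ndbD_one_one_eq_two (hG : IsTriangleBalanced G) (hreg : G.IsRegularOfDegree 4)
    (huv : G.Adj u v) (hy : y ∈ ndbD G u v 1 1) (hz : z ∈ ndbD G u v 1 1) (hyz : y ≠ z) :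
    #(ndbD G u v 1 1) = 2 :=
  le_antisymm (hG.card_ndbD_one_one_le hreg huv) (one_lt_card.mpr ⟨y, hy, z, hz, hyz⟩)

lemma eq_or_eq_of_mem_ndbD_one_one (hG : IsTriangleBalanced G) (hreg : G.IsRegularOfDegree 4)
    (huv : G.Adj u v) (hy : y ∈ ndbD G u v 1 1) (hz : z ∈ ndbD G u v 1 1) (hyz : y ≠ z)
    (hx : x ∈ ndbD G u v 1 1) : x = y ∨ x = z := by
  by_contra! h
  have := two_lt_card.mpr ⟨x, hx, y, hy, z, hz, h.1, h.2, hyz⟩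
  have := hG.card_ndbD_one_one_le hreg huv
  lia

lemma ndbD_one_two_eq_singleton_of_clique (hG : IsTriangleBalanced G)
    (hreg : G.IsRegularOfDegree 4) (huv : G.Adj u v) (hy : y ∈ ndbD G u v 1 1)
    (hz : z ∈ ndbD G u v 1 1) (hyz : G.Adj y z) (hp : ndbD G u v 1 2 = {p}) :
    ndbD G u y 1 2 = {p} := by
  have hpD : p ∈ ndbD G u v 1 2 := hp ▸ mem_singleton_self p
  simp only [mem_ndbD, dist_eq_one_iff_adj] at hy hz hpD
  have hvD : v ∈ ndbD G u y 1 1 := by simp [huv.symm, hy.2.symm]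
  have hzD : z ∈ ndbD G u y 1 1 := by simp [hz.1, hyz.symm]
  obtain ⟨p', hp'⟩ := exists_ndbD_one_two_eq_singleton hreg hy.1.symm
    (hG.card_ndbD_one_one_eq_two hreg hy.1.symm hvD hzD hz.2.ne')
  have hpv : p ≠ v := by rintro rfl; simp at hpD
  have hpz : p ≠ z := by rintro rfl; simp [dist_eq_one_iff_adj.mpr hz.2] at hpD
  have hpy : p ≠ y := by rintro rfl; simp [dist_eq_one_iff_adj.mpr hy.2] at hpD
  have hpp' : p = p' := by
    by_contra hne
    have := hG.eq_or_eq_of_mem_ndbD_one_one hreg hy.1.symm hvD hzD hz.2.ne'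
      (mem_ndbD_one_one_of_adj hy.1.symm hp' hpD.1 hpy hne)
    tauto
  exact hpp' ▸ hp'

lemma not_adj_of_clique (hG : IsTriangleBalanced G) (hreg : G.IsRegularOfDegree 4)
    (huv : G.Adj u v) (hy : y ∈ ndbD G u v 1 1) (hz : z ∈ ndbD G u v 1 1) (hyz : G.Adj y z)
    (hp : ndbD G u v 1 2 = {p}) (hx : x ∈ ndbD G u v 1 1) : ¬ G.Adj p x := by
  have hpD : p ∈ ndbD G u x 1 2 := by
    rcases hG.eq_or_eq_of_mem_ndbD_one_one hreg huv hy hz hyz.ne hx with rfl | rfl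
    · simp [hG.ndbD_one_two_eq_singleton_of_clique hreg huv hy hz hyz hp]
    · simp [hG.ndbD_one_two_eq_singleton_of_clique hreg huv hz hy hyz.symm hp]
  rw [← dist_eq_one_iff_adj, (mem_ndbD.mp hpD).2]
  norm_num

-- Both sets have two elements among the three neighbors of `p` other than `u`.
lemma exists_mem_ndbD_two_three_of_ndbD_one_two_eq (hG : IsTriangleBalanced G)
    (hreg : G.IsRegularOfDegree 4) (huv : G.Adj u v) (huy : G.Adj u y)
    (hpv : ndbD G u v 1 2 = {p}) (hpy : ndbD G u y 1 2 = {p}) :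
    ∃ f ∈ ndbD G u v 2 3, f ∈ ndbD G u y 2 3 := by
  classical
  have card_two_three {w : V} (huw : G.Adj u w) (hpw : ndbD G u w 1 2 = {p}) :
      #(ndbD G u w 2 3) = 2 := by
    have hdeg := degree_eq_card_ndbD_add huw
    rw [hreg u, hpw, card_singleton] at hdeg
    rw [hG.card_two_three huw]
    lia
  have hup : u ∈ G.neighborFinset p := by
    have hpD : p ∈ ndbD G u v 1 2 := hpv ▸ mem_singleton_self p
    exact (G.mem_neighborFinset p u).mpr (dist_eq_one_iff_adj.mp (mem_ndbD.mp hpD).1)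
  obtain ⟨f, hf⟩ := inter_nonempty_of_card_lt_card_add_card
    (ndbD_two_three_subset_erase_neighborFinset huv hpv)
    (ndbD_two_three_subset_erase_neighborFinset huy hpy) (by
      rw [card_erase_of_mem hup, card_neighborFinset_eq_degree, hreg p, card_two_three huv hpv,
        card_two_three huy hpy]
      norm_num)
  exact ⟨f, mem_inter.mp hf⟩

lemma not_adj_of_mem_ndbD_one_one (hG : IsTriangleBalanced G) (hreg : G.IsRegularOfDegree 4)
    (huv : G.Adj u v) (hy : y ∈ ndbD G u v 1 1) (hz : z ∈ ndbD G u v 1 1) : ¬ G.Adj y z := by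
  intro hyz
  have hy' : y ∈ ndbD G v u 1 1 := ndbD_swap u v 1 1 ▸ hy
  have hz' : z ∈ ndbD G v u 1 1 := ndbD_swap u v 1 1 ▸ hz
  have huy : G.Adj u y := (dist_eq_one_iff_adj.mp (mem_ndbD.mp hy).1).symm
  have hvy : G.Adj v y := (dist_eq_one_iff_adj.mp (mem_ndbD.mp hy).2).symm
  obtain ⟨p, hp⟩ := exists_ndbD_one_two_eq_singleton hreg huv
    (hG.card_ndbD_one_one_eq_two hreg huv hy hz hyz.ne)
  obtain ⟨q, hq⟩ := exists_ndbD_one_two_eq_singleton hreg huv.symm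
    (hG.card_ndbD_one_one_eq_two hreg huv.symm hy' hz' hyz.ne)
  have hpy := hG.ndbD_one_two_eq_singleton_of_clique hreg huv hy hz hyz hp
  have hqy := hG.ndbD_one_two_eq_singleton_of_clique hreg huv.symm hy' hz' hyz hq
  obtain ⟨f, hfv, hfy⟩ := hG.exists_mem_ndbD_two_three_of_ndbD_one_two_eq hreg huv huy hp hpy
  obtain ⟨hvD, hqD⟩ := hG.mem_ndbD_two_three_of_forall_not_adj huv hp hq
    (fun _ => hG.not_adj_of_clique hreg huv.symm hy' hz' hyz hq) hfv
  have hyD : y ∈ ndbD G p f 2 3 := by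
    have hpD : p ∈ ndbD G u y 1 2 := hpy ▸ mem_singleton_self p
    simpa only [mem_ndbD, G.dist_comm (u := y)] using
      ⟨(mem_ndbD.mp hpD).2, (mem_ndbD.mp hfy).2⟩
  have hqvy : q ∈ ndbD G v y 1 2 := hqy ▸ mem_singleton_self q
  have hvq : v ≠ q := by rintro rfl; simp at hqvy
  have hqy_ne : q ≠ y := by rintro rfl; simp at hqvy
  have hpf : G.Adj p f := (adj_of_mem_ndbD_two_three huv hp hfv).symm
  have hthree := two_lt_card.mpr ⟨v, hvD, q, hqD, y, hyD, hvq, hvy.ne, hqy_ne⟩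
  rw [hG.card_two_three hpf] at hthree
  have := hG.card_ndbD_one_one_le hreg hpf
  lia

end IsTriangleBalanced

/-- `IsLocalPath G u z v y p`: the neighbors `z, v, y, p` of `u` carry a path `z - v - y - p` of
the local graph at `u` in which `p` is not adjacent to `v`. Excluding it shows that, for an edge
`uv` in two triangles, the fourth neighbors of `u` and `v` are not adjacent to the common ones. -/
structure IsLocalPath {V : Type*} [Fintype V] (G : SimpleGraph V) (u z v y p : V) : Prop where
  adj : G.Adj u v
  ne : y ≠ z
  mem_left : z ∈ ndbD G u v 1 1
  mem_right : y ∈ ndbD G u v 1 1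
  mem_end : p ∈ ndbD G u v 1 2
  adj_end : G.Adj p y

namespace IsLocalPath

variable {V : Type*} [Fintype V] {G : SimpleGraph V} [DecidableRel G.Adj] {u z v y p x t : V}

lemma card_ndbD_one_one (h : IsLocalPath G u z v y p) (hG : IsTriangleBalanced G)
    (hreg : G.IsRegularOfDegree 4) : #(ndbD G u v 1 1) = 2 :=
  hG.card_ndbD_one_one_eq_two hreg h.adj h.mem_right h.mem_left h.ne

lemma ndbD_one_two (h : IsLocalPath G u z v y p) (hG : IsTriangleBalanced G)
    (hreg : G.IsRegularOfDegree 4) : ndbD G u v 1 2 = {p} := by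
  obtain ⟨p', hp'⟩ :=
    exists_ndbD_one_two_eq_singleton hreg h.adj (h.card_ndbD_one_one hG hreg)
  have hpp' := h.mem_end
  rw [hp', mem_singleton] at hpp'
  exact hpp' ▸ hp'

lemma eq_or_mem_of_adj_end (h : IsLocalPath G u z v y p) (hG : IsTriangleBalanced G)
    (hreg : G.IsRegularOfDegree 4) (hx : G.Adj x p) : x = u ∨ x = y ∨ x ∈ ndbD G u v 2 3 := by
  classical
  have hu : u ∉ ndbD G u v 2 3 := by simp
  have hyu : y ≠ u := by rintro rfl; simpa using h.mem_right
  have hy : y ∉ ndbD G u v 2 3 := by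
    have := h.mem_right
    simp only [mem_ndbD] at this ⊢
    lia
  have hsub : insert u (insert y (ndbD G u v 2 3)) ⊆ G.neighborFinset p := by
    have hpu := (mem_ndbD.mp h.mem_end).1
    simp only [insert_subset_iff, mem_neighborFinset]
    exact ⟨dist_eq_one_iff_adj.mp hpu, h.adj_end, fun t ht => (G.mem_neighborFinset p t).mpr
      (adj_of_mem_ndbD_two_three h.adj (h.ndbD_one_two hG hreg) ht).symm⟩
  have hcard : #(insert u (insert y (ndbD G u v 2 3))) = 4 := by
    rw [card_insert_of_notMem (by simp [hyu.symm]), card_insert_of_notMem hy,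
      hG.card_two_three h.adj, h.card_ndbD_one_one hG hreg]
  have heq := eq_of_subset_of_card_le hsub (by rw [card_neighborFinset_eq_degree, hreg p, hcard])
  have hxN : x ∈ insert u (insert y (ndbD G u v 2 3)) :=
    heq ▸ (G.mem_neighborFinset p x).mpr hx.symm
  simpa only [mem_insert] using hxN

lemma dist_left_end (h : IsLocalPath G u z v y p) (hG : IsTriangleBalanced G)
    (hreg : G.IsRegularOfDegree 4) : G.dist z p = 2 := by
  have hz := h.mem_left
  have hp := h.mem_end
  simp only [mem_ndbD, dist_eq_one_iff_adj] at hz hp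
  have hzp : z ≠ p := by
    rintro rfl
    simp [dist_eq_one_iff_adj.mpr hz.2] at hp
  have hnadj : ¬ G.Adj z p := fun hadj => by
    rcases h.eq_or_mem_of_adj_end hG hreg hadj with rfl | rfl | hD
    · exact hz.1.ne rfl
    · exact h.ne rfl
    · simp [dist_eq_one_iff_adj.mpr hz.2] at hD
  rcases (adj_iff_eq_or_mem_ndbD hp.1.symm).mp hz.1 with rfl | hD | hD
  · exact absurd rfl hzp
  · simp [hnadj] at hD
  · exact (mem_ndbD.mp hD).2

lemma dist_left_le_two (h : IsLocalPath G u z v y p) (hG : IsTriangleBalanced G)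
    (hreg : G.IsRegularOfDegree 4) (ht : t ∈ ndbD G u v 2 3) : G.dist t z ≤ 2 := by
  classical
  by_contra! htz
  have hpt : G.Adj p t :=
    (adj_of_mem_ndbD_two_three h.adj (h.ndbD_one_two hG hreg) ht).symm
  obtain ⟨htu, htv⟩ := mem_ndbD.mp ht
  have hv : v ∈ ndbD G p t 2 3 := by
    simpa only [mem_ndbD, G.dist_comm (u := v)] using ⟨(mem_ndbD.mp h.mem_end).2, htv⟩
  have hz : z ∈ ndbD G p t 2 3 := by
    have hzt := G.dist_comm ▸ le_antisymm (hG.dist_le_three t z) htz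
    exact mem_ndbD.mpr ⟨h.dist_left_end hG hreg, hzt⟩
  have hvz : v ≠ z := by rintro rfl; simpa using h.mem_left
  have hsub : ndbD G p t 1 1 ⊆ (ndbD G u v 2 3).erase t := by
    intro r hr
    simp only [mem_ndbD, dist_eq_one_iff_adj] at hr
    refine mem_erase.mpr ⟨hr.2.ne, ?_⟩
    rcases h.eq_or_mem_of_adj_end hG hreg hr.1 with rfl | rfl | hD
    · simp [dist_eq_one_iff_adj.mpr hr.2.symm] at htu
    · have hle := dist_le_dist_add_one_of_adj v hr.2.symm
      simp only [G.dist_comm (u := v), (mem_ndbD.mp h.mem_right).2, htv] at hle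
      lia
    · exact hD
  have hle := card_le_card hsub
  have hlt := one_lt_card.mpr ⟨v, hv, z, hz, hvz⟩
  rw [card_erase_of_mem ht, hG.card_two_three h.adj, h.card_ndbD_one_one hG hreg,
    ← hG.card_two_three hpt] at hle
  lia

lemma card_ndbD_one_one_right (h : IsLocalPath G u z v y p) (hG : IsTriangleBalanced G)
    (hreg : G.IsRegularOfDegree 4) : #(ndbD G u y 1 1) = 2 := by
  have hy := h.mem_right
  have hp := h.mem_end
  simp only [mem_ndbD, dist_eq_one_iff_adj] at hy hp
  have hvp : v ≠ p := by rintro rfl; simp at hp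
  exact hG.card_ndbD_one_one_eq_two hreg hy.1.symm
    (y := v) (z := p) (by simp [h.adj.symm, hy.2.symm]) (by simp [hp.1, h.adj_end]) hvp

lemma ndbD_one_two_right (h : IsLocalPath G u z v y p) (hG : IsTriangleBalanced G)
    (hreg : G.IsRegularOfDegree 4) : ndbD G u y 1 2 = {z} := by
  have hnadj : ¬ G.Adj z y := hG.not_adj_of_mem_ndbD_one_one hreg h.adj h.mem_left h.mem_right
  have hy := h.mem_right
  have hz := h.mem_left
  simp only [mem_ndbD, dist_eq_one_iff_adj] at hy hz
  obtain ⟨z', hz'⟩ :=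
    exists_ndbD_one_two_eq_singleton hreg hy.1.symm (h.card_ndbD_one_one_right hG hreg)
  have hzz' : z = z' := by
    by_contra hne
    have := mem_ndbD_one_one_of_adj hy.1.symm hz' hz.1 h.ne.symm hne
    simp [hnadj] at this
  exact hzz' ▸ hz'

lemma one_lt_card_ndbD_one_one_center (h : IsLocalPath G u z v y p) (hG : IsTriangleBalanced G)
    (hreg : G.IsRegularOfDegree 4) : 1 < #(ndbD G v y 1 1) := by
  have hy := h.mem_right
  have hz := h.mem_left
  simp only [mem_ndbD, dist_eq_one_iff_adj] at hy hz
  have hsub : ndbD G u y 2 3 ⊆ ndbD G v y 2 3 := by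
    intro g hg
    have hgz : G.Adj g z :=
      adj_of_mem_ndbD_two_three hy.1.symm (h.ndbD_one_two_right hG hreg) hg
    obtain ⟨-, hgy⟩ := mem_ndbD.mp hg
    have hyv := dist_le_dist_add_one_of_adj g hy.2
    have hvg := dist_le_dist_add_one_of_adj v hgz
    rw [G.dist_comm, dist_eq_one_iff_adj.mpr hz.2.symm] at hvg
    exact mem_ndbD.mpr ⟨by lia, hgy⟩
  have hle := card_le_card hsub
  rw [hG.card_two_three hy.1.symm, hG.card_two_three hy.2.symm,
    h.card_ndbD_one_one_right hG hreg] at hle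
  lia

lemma exists_adj_forall_adj_right (h : IsLocalPath G u z v y p) (hG : IsTriangleBalanced G)
    (hreg : G.IsRegularOfDegree 4) :
    ∃ w, G.Adj w v ∧ ∀ x, G.Adj x y → x = u ∨ x = v ∨ x = p ∨ x = w := by
  classical
  have hy := h.mem_right
  have hp := h.mem_end
  simp only [mem_ndbD, dist_eq_one_iff_adj] at hy hp
  obtain ⟨w, hw, hwu⟩ := exists_mem_ne (h.one_lt_card_ndbD_one_one_center hG hreg) u
  simp only [mem_ndbD, dist_eq_one_iff_adj] at hw
  have hpw : p ≠ w := by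
    rintro rfl
    simp [dist_eq_one_iff_adj.mpr hw.1] at hp
  have hvp : v ≠ p := by rintro rfl; simp at hp
  have hN : {u, v, p, w} = G.neighborFinset y := by
    refine eq_of_subset_of_card_le ?_ ?_
    · simp [insert_subset_iff, hy.1, hy.2, h.adj_end.symm, hw.2.symm]
    · rw [card_neighborFinset_eq_degree, hreg y, card_insert_of_notMem, card_insert_of_notMem,
        card_pair hpw]
      · simp [hvp, hw.1.ne']
      · simp [h.adj.ne, hp.1.ne', hwu.symm]
  refine ⟨w, hw.1, fun x hx => ?_⟩
  have hxN : x ∈ ({u, v, p, w} : Finset V) := hN ▸ (G.mem_neighborFinset y x).mpr hx.symm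
  simpa using hxN

end IsLocalPath

namespace IsTriangleBalanced

variable {V : Type*} [Fintype V] {G : SimpleGraph V} {u v x y z p q : V}

lemma not_isLocalPath [DecidableRel G.Adj] (hG : IsTriangleBalanced G)
    (hreg : G.IsRegularOfDegree 4) : ¬ IsLocalPath G u z v y p := by
  intro h
  have hz := h.mem_left
  simp only [mem_ndbD, dist_eq_one_iff_adj] at hz
  have hvz : v ∈ ndbD G u z 1 1 := by simp [h.adj.symm, hz.2.symm]
  obtain ⟨e, he⟩ : (ndbD G u z 2 3).Nonempty := by
    rw [← card_pos, hG.card_two_three hz.1.symm]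
    exact card_pos.mpr ⟨v, hvz⟩
  obtain ⟨r, hr, her⟩ := exists_adj_mem_ndbD_one_two hz.1.symm he
  obtain ⟨heu, hez⟩ := mem_ndbD.mp he
  obtain ⟨hru, hrz⟩ := mem_ndbD.mp hr
  obtain rfl | rfl | rfl : r = v ∨ r = y ∨ r = p := by
    rcases (adj_iff_eq_or_mem_ndbD h.adj).mp (dist_eq_one_iff_adj.mp hru) with hrv | hrD | hrD
    · exact Or.inl hrv
    · rcases hG.eq_or_eq_of_mem_ndbD_one_one hreg h.adj h.mem_right h.mem_left h.ne hrD with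
        hry | rfl
      · exact Or.inr (Or.inl hry)
      · simp at hrz
    · rw [h.ndbD_one_two hG hreg, mem_singleton] at hrD
      exact Or.inr (Or.inr hrD)
  · simp [dist_eq_one_iff_adj.mpr hz.2.symm] at hrz
  · obtain ⟨w, hwv, hN⟩ := h.exists_adj_forall_adj_right hG hreg
    rcases hN e her with rfl | rfl | rfl | rfl
    · simp at heu
    · simp [dist_eq_one_iff_adj.mpr h.adj.symm] at heu
    · simp [(mem_ndbD.mp h.mem_end).1] at heu
    · have := dist_le_dist_add_one_of_adj z hwv
      simp only [G.dist_comm (u := z), hez, dist_eq_one_iff_adj.mpr hz.2.symm] at this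
      lia
  · rcases h.eq_or_mem_of_adj_end hG hreg her with rfl | rfl | he'
    · simp at heu
    · simp [(mem_ndbD.mp h.mem_right).1] at heu
    · have := h.dist_left_le_two hG hreg he'
      lia

lemma ndbD_one_two_eq_singleton_of_forall_not_adj [DecidableRel G.Adj]
    (hG : IsTriangleBalanced G) (hreg : G.IsRegularOfDegree 4) (huv : G.Adj u v)
    (hp : ndbD G u v 1 2 = {p}) (hq : ndbD G v u 1 2 = {q})
    (h : ∀ y ∈ ndbD G v u 1 1, ¬ G.Adj q y) (hx : x ∈ ndbD G u v 2 3) :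
    ndbD G p x 1 2 = {u} := by
  have hpD : p ∈ ndbD G u v 1 2 := hp ▸ mem_singleton_self p
  have hqD : q ∈ ndbD G v u 1 2 := hq ▸ mem_singleton_self q
  have hvq : v ≠ q := by rintro rfl; simp at hqD
  have hpx : G.Adj p x := (adj_of_mem_ndbD_two_three huv hp hx).symm
  obtain ⟨hvpx, hqpx⟩ := hG.mem_ndbD_two_three_of_forall_not_adj huv hp hq h hx
  have htwo : 1 < #(ndbD G p x 1 1) :=
    hG.card_two_three hpx ▸ one_lt_card.mpr ⟨v, hvpx, q, hqpx, hvq⟩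
  obtain ⟨u', hu'⟩ := exists_ndbD_one_two_eq_singleton hreg hpx
    (le_antisymm (hG.card_ndbD_one_one_le hreg hpx) htwo)
  have hu : u ∈ ndbD G p x 1 2 := by
    simpa only [mem_ndbD, G.dist_comm (u := u)] using
      ⟨(mem_ndbD.mp hpD).1, (mem_ndbD.mp hx).1⟩
  rw [hu', mem_singleton] at hu
  exact hu ▸ hu'

lemma card_ndbD_one_one_le_one [DecidableRel G.Adj] (hG : IsTriangleBalanced G)
    (hreg : G.IsRegularOfDegree 4) (huv : G.Adj u v) : #(ndbD G u v 1 1) ≤ 1 := by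
  classical
  by_contra! hlt
  have hcard : #(ndbD G u v 1 1) = 2 := le_antisymm (hG.card_ndbD_one_one_le hreg huv) hlt
  have hcard' : #(ndbD G v u 1 1) = 2 := ndbD_swap u v 1 1 ▸ hcard
  obtain ⟨p, hp⟩ := exists_ndbD_one_two_eq_singleton hreg huv hcard
  obtain ⟨q, hq⟩ := exists_ndbD_one_two_eq_singleton hreg huv.symm hcard'
  have hq_far : ∀ y ∈ ndbD G v u 1 1, ¬ G.Adj q y := fun y hy hqy => by
    obtain ⟨z, hz, hzy⟩ := exists_mem_ne (hcard' ▸ one_lt_two) y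
    exact hG.not_isLocalPath hreg ⟨huv.symm, hzy.symm, hz, hy, hq ▸ mem_singleton_self q, hqy⟩
  have hpt (t) (ht : t ∈ ndbD G u v 2 3) : G.Adj p t :=
    (adj_of_mem_ndbD_two_three huv hp ht).symm
  have hu_only (t) (ht : t ∈ ndbD G u v 2 3) : ndbD G p t 1 2 = {u} :=
    hG.ndbD_one_two_eq_singleton_of_forall_not_adj hreg huv hp hq hq_far ht
  obtain ⟨a, ha, b, hb, hab⟩ := one_lt_card.mp (hG.card_two_three huv ▸ hlt)
  obtain ⟨w, hwp, hw⟩ : ∃ w ∈ G.neighborFinset p, w ∉ ({u, a, b} : Finset V) := by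
    refine exists_mem_notMem_of_card_lt_card (card_le_three.trans_lt ?_)
    rw [card_neighborFinset_eq_degree, hreg p]
    norm_num
  simp only [mem_neighborFinset, mem_insert, mem_singleton, not_or] at hwp hw
  have hbu : b ≠ u := by rintro rfl; simp at hb
  have hba := mem_ndbD_one_one_of_adj (hpt a ha) (hu_only a ha) (hpt b hb).symm hab.symm hbu
  have hwa := mem_ndbD_one_one_of_adj (hpt a ha) (hu_only a ha) hwp.symm hw.2.1 hw.1
  have hwb := mem_ndbD_one_one_of_adj (hpt b hb) (hu_only b hb) hwp.symm hw.2.2 hw.1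
  exact hG.not_adj_of_mem_ndbD_one_one hreg (hpt a ha) hwa hba
    (dist_eq_one_iff_adj.mp (mem_ndbD.mp hwb).2)

lemma forall_dist_ne_three_of_ndbD_one_one_eq_empty [DecidableRel G.Adj]
    (hG : IsTriangleBalanced G) (hreg : G.IsRegularOfDegree 4) (hxy : G.Adj x y)
    (h0 : ndbD G x y 1 1 = ∅) (f : V) : G.dist f x ≠ 3 := by
  intro hf
  obtain ⟨g, hfg, hg⟩ := exists_adj_dist_eq_of_dist_eq_succ hf
  obtain ⟨hx, hy⟩ := hG.mem_ndbD_two_three_of_ndbD_one_one_eq_empty hxy h0 hfg.symm hg hf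
  have := one_lt_card.mpr ⟨x, hx, y, hy, hxy.ne⟩
  have := hG.card_two_three hfg.symm
  have := hG.card_ndbD_one_one_le_one hreg hfg.symm
  lia

lemma forall_dist_ne_three_of_adj [DecidableRel G.Adj] (hG : IsTriangleBalanced G)
    (hreg : G.IsRegularOfDegree 4) (hxy : G.Adj x y) (hx : ∀ f, G.dist f x ≠ 3) (f : V) :
    G.dist f y ≠ 3 := by
  refine hG.forall_dist_ne_three_of_ndbD_one_one_eq_empty hreg hxy.symm ?_ f
  have h23 : ndbD G y x 2 3 = ∅ :=
    eq_empty_of_forall_notMem fun f hf => hx f (mem_ndbD.mp hf).2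
  rw [← card_eq_zero, ← hG.card_two_three hxy.symm, h23, card_empty]

lemma card_ndbD_one_one_eq_one [DecidableRel G.Adj] (hG : IsTriangleBalanced G)
    (hreg : G.IsRegularOfDegree 4) (hdiam : ∃ a b, G.dist a b = 3) (huv : G.Adj u v) :
    #(ndbD G u v 1 1) = 1 := by
  refine le_antisymm (hG.card_ndbD_one_one_le_one hreg huv) (card_pos.mpr ?_)
  by_contra! h0
  have hecc (b f : V) : G.dist f b ≠ 3 := by
    induction (G.reachable_iff_reflTransGen u b).mp (hG.connected u b) generalizing f with
    | refl => exact hG.forall_dist_ne_three_of_ndbD_one_one_eq_empty hreg huv h0 f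
    | tail _ hadj ih => exact hG.forall_dist_ne_three_of_adj hreg hadj ih f
  obtain ⟨a, b, hab⟩ := hdiam
  exact hecc b a hab

end IsTriangleBalanced

/-- In a regular NDB graph with valency `4`, diameter `3` and
`γ = 4`, for every edge `x₀x₁` we have `|D^1_2(x₁,x₀)| = |D^2_1(x₁,x₀)| = 2`. -/
theorem stmt_16 {V : Type*} [Fintype V] (G : SimpleGraph V) [DecidableRel G.Adj]
    (hconn : G.Connected) (hreg : G.IsRegularOfDegree 4)
    (hdiam : HasDiam G 3) (hndb : IsNDB G 4)
    (x₀ x₁ : V) (h : G.Adj x₀ x₁) :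
    (ndbD G x₁ x₀ 1 2).card = 2 ∧ (ndbD G x₁ x₀ 2 1).card = 2 := by
  have hG : IsTriangleBalanced G := hndb.isTriangleBalanced hconn hreg hdiam.1
  have card_one_two {u v : V} (huv : G.Adj u v) : #(ndbD G u v 1 2) = 2 := by
    have hdeg := degree_eq_card_ndbD_add huv
    rw [hreg u, hG.card_ndbD_one_one_eq_one hreg hdiam.2 huv] at hdeg
    lia
  exact ⟨card_one_two h.symm, ndbD_swap x₁ x₀ 2 1 ▸ card_one_two h⟩
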